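/- The multiplier sequence of the F²SA step-size design stays on the prescribed polynomial schedule: λ_k = γ_k/(2 α_k) = (c_γ/(2 c_α)) (k + k₀)^{a−c} for all k ≥ 0. In particular, the minimum in the definition of δ_k is always attained by its second argument. -/

import Mathlib

/-!
Along the target `cγ / (2 cα) x ^ (a - c)`, where `x = k + k₀`, the quadratic growth term equals
`cγ / (2 cα) * (T / 32) * (x / k₀) ^ (1 - c) * x ^ (a - c - 1)`, while by Bernoulli's inequality
the target increases by at most `cγ / (2 cα) * max 0 (a - c) * x ^ (a - c - 1)`. So the growth term
always permits the step to the next target value.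
-/

theorem eq_of_add_min_sub {G : Type*} [AddCommGroup G] [LinearOrder G] {u τ : ℕ → G}
    {g : ℕ → G → G} (h_zero : u 0 = τ 0)
    (h_succ : ∀ k, u (k + 1) = u k + min (g k (u k)) (τ (k + 1) - u k))
    (h_growth : ∀ k, τ (k + 1) - τ k ≤ g k (τ k)) (k : ℕ) : u k = τ k := by
  induction k with
  | zero => exact h_zero
  | succ k ih => rw [h_succ, ih, min_eq_right (h_growth k), add_sub_cancel]

section Rpow

variable {x a c p : ℝ}

theorem one_add_rpow_le_one_add_max_mul {t : ℝ} (ht : 0 ≤ t) (hp : p ≤ 1) :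
    (1 + t) ^ p ≤ 1 + max 0 p * t := by
  rcases le_total 0 p with hp₀ | hp₀
  · rw [max_eq_right hp₀]
    exact rpow_one_add_le_one_add_mul_self (by linarith) hp₀ hp
  · rw [max_eq_left hp₀, zero_mul, add_zero]
    exact Real.rpow_le_one_of_one_le_of_nonpos (by linarith) hp₀

theorem rpow_add_one_sub_rpow_le (hx : 0 < x) (hp : p ≤ 1) :
    (x + 1) ^ p - x ^ p ≤ max 0 p * x ^ (p - 1) := by
  have h_factor : (x + 1) ^ p = x ^ p * (1 + 1 / x) ^ p := by
    rw [← Real.mul_rpow hx.le (by positivity), mul_add, mul_one, mul_one_div_cancel hx.ne']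
  calc (x + 1) ^ p - x ^ p = x ^ p * (1 + 1 / x) ^ p - x ^ p := by rw [h_factor]
    _ ≤ x ^ p * (1 + max 0 p * (1 / x)) - x ^ p := by
      gcongr
      exact one_add_rpow_le_one_add_max_mul (by positivity) hp
    _ = max 0 p * x ^ (p - 1) := by
      rw [Real.rpow_sub_one hx.ne']
      ring

theorem div_rpow_div_div_rpow (hx : 0 < x) (b d : ℝ) :
    b / x ^ c / (d / x ^ a) = b / d * x ^ (a - c) := by
  rw [Real.rpow_sub hx, div_div_div_eq, mul_comm (x ^ c), mul_div_mul_comm]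

theorem sq_rpow_sub_div_rpow (hx : 0 < x) :
    (x ^ (a - c)) ^ 2 / x ^ a = x ^ (1 - c) * x ^ (a - c - 1) := by
  rw [sq, ← Real.rpow_add hx, ← Real.rpow_sub hx, ← Real.rpow_add hx]
  ring_nf

theorem schedule_increment_le {cα cγ K : ℝ} (hx : 0 < x) (hac : a - c ≤ 1) (hcα : 0 < cα)
    (hcγ : 0 ≤ cγ) (hK : 2 * max 0 (a - c) ≤ K * cγ * x ^ (1 - c)) :
    cγ / (2 * cα) * (x + 1) ^ (a - c) - cγ / (2 * cα) * x ^ (a - c) ≤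
      K * (cα / x ^ a) * (cγ / (2 * cα) * x ^ (a - c)) ^ 2 := by
  have hK' : max 0 (a - c) ≤ K * cγ * x ^ (1 - c) / 2 := by linarith
  calc cγ / (2 * cα) * (x + 1) ^ (a - c) - cγ / (2 * cα) * x ^ (a - c)
      = cγ / (2 * cα) * ((x + 1) ^ (a - c) - x ^ (a - c)) := by ring
    _ ≤ cγ / (2 * cα) * (max 0 (a - c) * x ^ (a - c - 1)) := by
      gcongr
      exact rpow_add_one_sub_rpow_le hx hac
    _ ≤ cγ / (2 * cα) * (K * cγ * x ^ (1 - c) / 2 * x ^ (a - c - 1)) := by gcongr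
    _ = cγ / (2 * cα) * (K * cγ / 2) * ((x ^ (a - c)) ^ 2 / x ^ a) := by
      rw [sq_rpow_sub_div_rpow hx]
      ring
    _ = K * (cα / x ^ a) * (cγ / (2 * cα) * x ^ (a - c)) ^ 2 := by
      field_simp

end Rpow

theorem two_mul_le_growth_coefficient {T μ x s q M : ℝ} (hμ : 0 < μ) (hs : 0 < s) (hsx : s ≤ x)
    (hq : 0 ≤ q) (hM : 0 ≤ M) (hT : 32 * M ≤ T) :
    2 * M ≤ T * μ / 16 * (1 / (μ * s ^ q)) * x ^ q := by
  have h_ratio : 1 ≤ x ^ q / s ^ q :=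
    (one_le_div (by positivity)).mpr (Real.rpow_le_rpow hs.le hsx hq)
  calc 2 * M ≤ T / 16 := by linarith
    _ ≤ T / 16 * (x ^ q / s ^ q) := le_mul_of_one_le_right (by linarith) h_ratio
    _ = T * μ / 16 * (1 / (μ * s ^ q)) * x ^ q := by field_simp

theorem multiplier_schedule_polynomial_general {a c μg cα cγ T k₀ : ℝ}
    (hc : c ≤ 1) (hac : a - c ≤ 1) (hT : 32 * max 0 (a - c) ≤ T) (hμg : 0 < μg) (hk₀ : 0 < k₀)
    (hcα : 0 < cα) (hcγ : cγ = 1 / (μg * k₀ ^ (1 - c))) {α γ δ lam : ℕ → ℝ}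
    (hα : ∀ k, α k = cα / ((k : ℝ) + k₀) ^ a) (hγ : ∀ k, γ k = cγ / ((k : ℝ) + k₀) ^ c)
    (hlam0 : lam 0 = γ 0 / (2 * α 0))
    (hδ : ∀ k, δ k = min (T * μg / 16 * α k * lam k ^ 2) (γ (k + 1) / (2 * α (k + 1)) - lam k))
    (hrec : ∀ k, lam (k + 1) = lam k + δ k) (k : ℕ) :
    lam k = γ k / (2 * α k) ∧
      lam k = cγ / (2 * cα) * ((k : ℝ) + k₀) ^ (a - c) ∧
      δ k = γ (k + 1) / (2 * α (k + 1)) - lam k := by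
  have h_target (k : ℕ) : γ k / (2 * α k) = cγ / (2 * cα) * ((k : ℝ) + k₀) ^ (a - c) := by
    rw [hγ, hα, ← mul_div_assoc, div_rpow_div_div_rpow (by positivity)]
  have h_growth (k : ℕ) : γ (k + 1) / (2 * α (k + 1)) - γ k / (2 * α k) ≤
      T * μg / 16 * α k * (γ k / (2 * α k)) ^ 2 := by
    rw [h_target, h_target, hα, Nat.cast_succ, add_right_comm]
    refine schedule_increment_le (by positivity) hac hcα (by rw [hcγ]; positivity) ?_
    rw [hcγ]
    exact two_mul_le_growth_coefficient hμg hk₀ (le_add_of_nonneg_left k.cast_nonneg)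
      (sub_nonneg.mpr hc) (le_max_left _ _) hT
  have h_lam : ∀ k, lam k = γ k / (2 * α k) :=
    eq_of_add_min_sub (τ := fun k => γ k / (2 * α k))
      (g := fun k l => T * μg / 16 * α k * l ^ 2) hlam0 (fun k => by rw [hrec, hδ]) h_growth
  refine ⟨h_lam k, (h_lam k).trans (h_target k), ?_⟩
  rw [hδ, h_lam, min_eq_right (h_growth k)]

theorem multiplier_schedule_polynomial
    (a c μg cα cγ : ℝ) (T k₀ : ℕ)
    (hc : 0 ≤ c) (hca : c ≤ a) (ha : a ≤ 1)
    (hT : 32 ≤ T) (hμg : 0 < μg) (hk₀ : 1 ≤ k₀) (hcα : 0 < cα)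
    (hcγ : cγ = 1 / (μg * (k₀ : ℝ) ^ (1 - c)))
    (α γ δ lam : ℕ → ℝ)
    (hα : ∀ k, α k = cα / ((k : ℝ) + (k₀ : ℝ)) ^ a)
    (hγ : ∀ k, γ k = cγ / ((k : ℝ) + (k₀ : ℝ)) ^ c)
    (hlam0 : lam 0 = γ 0 / (2 * α 0))
    (hδ : ∀ k, δ k = min ((T : ℝ) * μg / 16 * α k * lam k ^ 2)
        (γ (k + 1) / (2 * α (k + 1)) - lam k))
    (hrec : ∀ k, lam (k + 1) = lam k + δ k) :
    ∀ k : ℕ,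
      lam k = γ k / (2 * α k) ∧
      lam k = cγ / (2 * cα) * ((k : ℝ) + (k₀ : ℝ)) ^ (a - c) ∧
      δ k = γ (k + 1) / (2 * α (k + 1)) - lam k := by
  have hT' : 32 * max 0 (a - c) ≤ (T : ℝ) := by
    have : max 0 (a - c) ≤ 1 := max_le zero_le_one (by linarith)
    have : (32 : ℝ) ≤ T := by exact_mod_cast hT
    linarith
  exact multiplier_schedule_polynomial_general (hca.trans ha) (by linarith) hT' hμg
    (Nat.cast_pos.mpr hk₀) hcα hcγ hα hγ hlam0 hδ hrec
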